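/- Stabilization of belief: let s be a set of clauses, α an objective formula, F a finite set of function terms containing all function terms occurring in s and in α, and k ≥ |F|. Then s ⊨ˢ B_k α if and only if s ⊨ˢ B_{|F|} α. -/

import Mathlib

/-! ## Limited belief: basic syntax and semantics (Schwering 2017, quantifier-free). -/

/-- Standard names (a countably infinite supply). -/
abbrev Name := ℕ

/-- Function terms `f(n₁,…,n_j)`: a function symbol applied to standard names. -/
structure FnTerm where
  sym : ℕ
  args : List Name
deriving DecidableEq, Inhabited

/-- Literals `t ≈ n` (pos) and `t ≉ n` (neg). -/
inductive Lit where
  | pos (t : FnTerm) (n : Name)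
  | neg (t : FnTerm) (n : Name)
deriving DecidableEq

instance : Inhabited Lit := ⟨.pos default 0⟩

/-- The left-hand side (function term) of a literal. -/
def Lit.lhs : Lit → FnTerm
  | .pos t _ => t
  | .neg t _ => t

/-- The right-hand side (standard name) of a literal. -/
def Lit.rhs : Lit → Name
  | .pos _ n => n
  | .neg _ n => n

/-- The negation `¬ℓ` of a literal. -/
def Lit.negate : Lit → Lit
  | .pos t n => .neg t n
  | .neg t n => .pos t n

/-- Names occurring in a literal. -/
def Lit.names (ℓ : Lit) : Finset Name := insert ℓ.rhs ℓ.lhs.args.toFinset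

/-- Two literals are complementary iff they are of the form `t ≈ n` and `t ≉ n`,
or of the form `t ≈ n` and `t ≈ n'` for distinct `n, n'`. -/
def Lit.complementary : Lit → Lit → Bool
  | .pos t n, .neg t' n' => t == t' && n == n'
  | .neg t n, .pos t' n' => t == t' && n == n'
  | .pos t n, .pos t' n' => t == t' && n != n'
  | .neg _ _, .neg _ _ => false

/-- A clause is a (finite) set of literals. -/
abbrev Clause := Finset Lit

/-- Unit propagation of clause `c` with literal `ℓ`: remove from `c` all
literals complementary to `ℓ`. -/
def Clause.prop (c : Clause) (ℓ : Lit) : Clause :=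
  c.filter (fun ℓ' => Lit.complementary ℓ' ℓ = false)

/-- `c₁` subsumes `c₂` iff for every `t ≈ n ∈ c₁`, `t ≈ n ∈ c₂` or `t ≉ n' ∈ c₂`
for some `n' ≠ n`, and for every `t ≉ n ∈ c₁`, `t ≉ n ∈ c₂`. -/
def Clause.subsumes (c₁ c₂ : Clause) : Prop :=
  (∀ t n, Lit.pos t n ∈ c₁ → Lit.pos t n ∈ c₂ ∨ ∃ n', n' ≠ n ∧ Lit.neg t n' ∈ c₂) ∧
  (∀ t n, Lit.neg t n ∈ c₁ → Lit.neg t n ∈ c₂)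

/-- `UP s`: the closure of the set of clauses `s` under unit propagation and
subsumption.  `UP s c` means `c ∈ UP(s)`. -/
inductive UP (s : Set Clause) : Clause → Prop
  | mem {c : Clause} : c ∈ s → UP s c
  | unit {c : Clause} {ℓ : Lit} : UP s {ℓ} → UP s c → UP s (c.prop ℓ)
  | sub {c₁ c₂ : Clause} : UP s c₁ → c₁.subsumes c₂ → UP s c₂

/-- Objective formulas: literals (`atom` is `t ≈ n`, `not atom` is `t ≉ n`),
negation and disjunction. -/
inductive Form where
  | atom (t : FnTerm) (n : Name)
  | not (φ : Form)
  | or (φ ψ : Form)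
deriving DecidableEq

/-- `α ∧ β` abbreviates `¬(¬α ∨ ¬β)`. -/
def Form.and (φ ψ : Form) : Form := .not (.or (.not φ) (.not ψ))

/-- `α → β` abbreviates `¬α ∨ β`. -/
def Form.imp (φ ψ : Form) : Form := .or (.not φ) ψ

/-- A formula is (syntactically) a clause iff it is a disjunction of literals. -/
def Form.isClause : Form → Bool
  | .atom _ _ => true
  | .not (.atom _ _) => true
  | .not _ => false
  | .or φ ψ => φ.isClause && ψ.isClause

/-- The set of literals of a clause-formula. -/
def Form.lits : Form → Clause
  | .atom t n => {Lit.pos t n}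
  | .not (.atom t n) => {Lit.neg t n}
  | .not _ => ∅
  | .or φ ψ => φ.lits ∪ ψ.lits

/-- The limited-belief truth relation `s ⊨ˢ α` for objective formulas:
a clause is true iff it is in `UP(s)`; a non-clause disjunction is true iff one
of its disjuncts is; `¬(α ∨ β)` is true iff `¬α` and `¬β` are; `¬¬α` is true
iff `α` is. -/
def sat (s : Set Clause) : Form → Prop
  | .atom t n => UP s {Lit.pos t n}
  | .not (.atom t n) => UP s {Lit.neg t n}
  | .not (.not φ) => sat s φ
  | .not (.or φ ψ) => sat s (.not φ) ∧ sat s (.not ψ)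
  | .or φ ψ => if (Form.or φ ψ).isClause then UP s (Form.or φ ψ).lits
               else sat s φ ∨ sat s ψ

/-- `satB s k α` is `s ⊨ˢ B_k α`: `B₀ α` holds iff `α` does, and `B_{k+1} α`
holds iff for some function term `t`, for all names `n`,
`s ∪ {t ≈ n} ⊨ˢ B_k α`. -/
def satB (s : Set Clause) : ℕ → Form → Prop
  | 0, φ => sat s φ
  | k+1, φ => ∃ t : FnTerm, ∀ n : Name, satB (s ∪ {({Lit.pos t n} : Clause)}) k φ

/-- A world maps function terms to standard names. -/
abbrev World := FnTerm → Name

/-- Classical truth of a literal in a world. -/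
def Lit.holds (w : World) : Lit → Prop
  | .pos t n => w t = n
  | .neg t n => w t ≠ n

/-- Classical truth of a clause in a world. -/
def Clause.holds (w : World) (c : Clause) : Prop := ∃ ℓ ∈ c, ℓ.holds w

/-- Classical truth of an objective formula in a world. -/
def wsat (w : World) : Form → Prop
  | .atom t n => w t = n
  | .not φ => ¬ wsat w φ
  | .or φ ψ => wsat w φ ∨ wsat w ψ

/-- Classical entailment `s ⊨ α`. -/
def entails (s : Set Clause) (φ : Form) : Prop :=
  ∀ w : World, (∀ c ∈ s, c.holds w) → wsat w φ

/-- Classical entailment of a clause (disjunction of its literals). -/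
def entailsClause (s : Set Clause) (c : Clause) : Prop :=
  ∀ w : World, (∀ c' ∈ s, c'.holds w) → c.holds w

/-- Function terms mentioned in a formula. -/
def Form.terms : Form → Finset FnTerm
  | .atom t _ => {t}
  | .not φ => φ.terms
  | .or φ ψ => φ.terms ∪ ψ.terms

/-- Standard names mentioned in a formula. -/
def Form.names : Form → Finset Name
  | .atom t n => insert n t.args.toFinset
  | .not φ => φ.names
  | .or φ ψ => φ.names ∪ ψ.names

theorem lits_terms (α : Form) : ∀ ℓ ∈ α.lits, Lit.lhs ℓ ∈ α.terms := by
  induction α using Form.lits.induct with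
  | case1 t n => simp [Form.lits, Form.terms, Lit.lhs]
  | case2 t n => simp [Form.lits, Form.terms, Lit.lhs]
  | case3 φ h =>
    intro ℓ hℓ
    cases φ with
    | atom t n => exact absurd rfl (h t n)
    | not _ => simp [Form.lits] at hℓ
    | or _ _ => simp [Form.lits] at hℓ
  | case4 φ ψ h1 h2 =>
    intro ℓ hℓ
    simp only [Form.lits, Form.terms, Finset.mem_union] at *
    exact hℓ.imp (h1 ℓ) (h2 ℓ)

theorem sat_transfer (s s' : Set Clause) (F : Finset FnTerm)
    (h : ∀ c : Clause, (∀ ℓ ∈ c, Lit.lhs ℓ ∈ F) → UP s c → UP s' c) (α : Form) :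
    α.terms ⊆ F → sat s α → sat s' α := by
  induction α using sat.induct with
  | case1 t n =>
    intro hF hs
    simp only [sat] at *
    exact h _ (by simpa [Form.terms, Lit.lhs] using hF) hs
  | case2 t n =>
    intro hF hs
    simp only [sat] at *
    exact h _ (by simpa [Form.terms, Lit.lhs] using hF) hs
  | case3 φ ih =>
    intro hF hs
    simp only [sat, Form.terms] at *
    exact ih hF hs
  | case4 φ ψ ih1 ih2 =>
    intro hF hs
    simp only [sat, Form.terms, Finset.union_subset_iff] at *
    exact ⟨ih1 hF.1 hs.1, ih2 hF.2 hs.2⟩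
  | case5 φ ψ hc =>
    intro hF hs
    rw [sat, if_pos hc] at *
    exact h _ (fun ℓ hℓ => hF (lits_terms _ ℓ hℓ)) hs
  | case6 φ ψ hc ih1 ih2 =>
    intro hF hs
    rw [sat, if_neg hc] at *
    simp only [Form.terms, Finset.union_subset_iff] at hF
    exact hs.imp (ih1 hF.1) (ih2 hF.2)

theorem UP_mono {s s' : Set Clause} (h : s ⊆ s') {c : Clause} (hc : UP s c) : UP s' c := by
  induction hc with
  | mem hm => exact .mem (h hm)
  | unit _ _ h1 h2 => exact .unit h1 h2
  | sub _ hs h1 => exact .sub h1 hs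

theorem sat_mono {s s' : Set Clause} (h : s ⊆ s') {α : Form} (hs : sat s α) : sat s' α :=
  sat_transfer s s' α.terms (fun _ _ => UP_mono h) α subset_rfl hs

theorem satB_succ (k : ℕ) (α : Form) : ∀ s, satB s k α → satB s (k+1) α := by
  induction k with
  | zero => intro s h; exact ⟨default, fun n => sat_mono Set.subset_union_left h⟩
  | succ k ih => rintro s ⟨t, ht⟩; exact ⟨t, fun n => ih _ (ht n)⟩

/-- The unit clauses of world `w` for terms in `T`. -/
def worldUnits (w : World) (T : Set FnTerm) : Set Clause :=
  {c | ∃ t ∈ T, c = {Lit.pos t (w t)}}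

theorem satB_world (k : ℕ) (α : Form) (w : World) :
    ∀ s, satB s k α → sat (s ∪ worldUnits w Set.univ) α := by
  induction k with
  | zero => intro s h; exact sat_mono Set.subset_union_left h
  | succ k ih =>
    rintro s ⟨t, ht⟩
    refine sat_mono ?_ (ih _ (ht (w t)))
    rintro c ((hc | hc) | hc)
    · exact .inl hc
    · exact .inr ⟨t, trivial, hc⟩
    · exact .inr hc

theorem world_satB (α : Form) (F : Finset FnTerm) :
    ∀ s, (∀ w, sat (s ∪ worldUnits w F) α) → satB s F.card α := by
  induction F using Finset.induction_on with
  | empty =>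
    intro s h
    exact sat_mono (by rintro c (hc | ⟨t, ht, _⟩); exacts [hc, by simp at ht]) (h fun _ => 0)
  | insert t F ht ih =>
    intro s h
    rw [Finset.card_insert_of_notMem ht]
    refine ⟨t, fun n => ih _ fun w => sat_mono ?_ (h (Function.update w t n))⟩
    rintro c (hc | ⟨u, hu, rfl⟩)
    · exact .inl (.inl hc)
    · by_cases e : u = t
      · subst e; left; right; simp
      · right
        refine ⟨u, ?_, by simp [e]⟩
        simpa [e] using hu

theorem compl_lhs {a b : Lit} (h : a.lhs ≠ b.lhs) : Lit.complementary a b = false := by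
  cases a <;> cases b <;> simp_all [Lit.complementary, Lit.lhs]

theorem compl_holds {a b : Lit} (w : World) (ha : a.holds w) (hb : b.holds w) :
    Lit.complementary a b = false := by
  cases a <;> cases b <;> simp_all [Lit.complementary, Lit.holds] <;> aesop

theorem UP_restrict (s : Set Clause) (F : Finset FnTerm) (w : World)
    (hsF : ∀ c ∈ s, ∀ ℓ ∈ c, Lit.lhs ℓ ∈ F) {c : Clause}
    (hc : UP (s ∪ worldUnits w Set.univ) c) :
    UP (s ∪ worldUnits w F) (c.filter fun ℓ => ℓ.lhs ∈ F) ∨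
      ∃ ℓ ∈ c, ℓ.lhs ∉ F ∧ ℓ.holds w := by
  induction hc with
  | @mem c hm =>
    rcases hm with hm | ⟨t, -, rfl⟩
    · left
      rw [Finset.filter_true_of_mem (hsF c hm)]
      exact .mem (.inl hm)
    · by_cases ht : t ∈ F
      · left
        rw [Finset.filter_true_of_mem (by simpa [Lit.lhs] using ht)]
        exact .mem (.inr ⟨t, ht, rfl⟩)
      · right
        exact ⟨_, Finset.mem_singleton_self _, ht, rfl⟩
  | @unit c ℓ _ _ h1 h2 =>
    by_cases hℓ : ℓ.lhs ∈ F
    · rcases h1 with h1 | ⟨_, h, h', _⟩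
      swap
      · rw [Finset.mem_singleton] at h; subst h; exact absurd hℓ h'
      rw [Finset.filter_true_of_mem (by simpa using hℓ)] at h1
      rcases h2 with h2 | ⟨m, hm, hmF, hw⟩
      · left
        have := UP.unit h1 h2
        rw [Clause.prop, Finset.filter_comm] at this
        exact this
      · right
        refine ⟨m, Finset.mem_filter.2 ⟨hm, compl_lhs fun e => hmF (e ▸ hℓ)⟩, hmF, hw⟩
    · rcases h1 with h1 | ⟨_, h, _, hw⟩
      · left
        rw [Finset.filter_false_of_mem (by simpa using hℓ)] at h1
        exact .sub h1 (by simp [Clause.subsumes])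
      · rw [Finset.mem_singleton] at h; subst h
        rcases h2 with h2 | ⟨m, hm, hmF, hmw⟩
        · left
          convert h2 using 1
          ext x
          simp only [Clause.prop, Finset.mem_filter]
          constructor
          · rintro ⟨⟨a, _⟩, b⟩; exact ⟨a, b⟩
          · rintro ⟨a, b⟩; exact ⟨⟨a, compl_lhs fun e => hℓ (e ▸ b)⟩, b⟩
        · right
          exact ⟨m, Finset.mem_filter.2 ⟨hm, compl_holds w hmw hw⟩, hmF, hmw⟩
  | @sub c₁ c₂ _ hs ih =>
    rcases ih with ih | ⟨m, hm, hmF, hw⟩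
    · left
      refine .sub ih ⟨fun t n h => ?_, fun t n h => ?_⟩
      · simp only [Finset.mem_filter] at h ⊢
        rcases hs.1 t n h.1 with h' | ⟨n', hn, h'⟩
        · exact .inl ⟨h', h.2⟩
        · exact .inr ⟨n', hn, h', h.2⟩
      · simp only [Finset.mem_filter] at h ⊢
        exact ⟨hs.2 t n h.1, h.2⟩
    · right
      cases m with
      | pos t n =>
        rcases hs.1 t n hm with h' | ⟨n', hn, h'⟩
        · exact ⟨_, h', hmF, hw⟩
        · refine ⟨_, h', hmF, ?_⟩
          simp only [Lit.holds] at *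
          rw [hw]; exact hn.symm
      | neg t n => exact ⟨_, hs.2 t n hm, hmF, hw⟩

/-- **Stabilization of belief** (Lemma 2): if `F` contains all function terms
occurring in `s` and `α` and `k ≥ |F|`, then `s ⊨ˢ B_k α` iff `s ⊨ˢ B_{|F|} α`. -/
theorem belief_level_stable (s : Set Clause) (α : Form) (F : Finset FnTerm)
    (hsF : ∀ c ∈ s, ∀ ℓ ∈ c, Lit.lhs ℓ ∈ F) (hαF : α.terms ⊆ F)
    (k : ℕ) (hk : F.card ≤ k) :
    satB s k α ↔ satB s F.card α := by
  constructor
  · intro h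
    refine world_satB α F s fun w => ?_
    refine sat_transfer _ _ F ?_ α hαF (satB_world k α w s h)
    intro c hcF hc
    rcases UP_restrict s F w hsF hc with h | ⟨ℓ, hℓ, hn, _⟩
    · rwa [Finset.filter_true_of_mem hcF] at h
    · exact absurd (hcF ℓ hℓ) hn
  · intro h
    induction k, hk using Nat.le_induction with
    | base => exact h
    | succ k _ ih => exact satB_succ k α s ih
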